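/- For general points, the following quasi-homogeneous systems of multiplicity 6 are empty (ℓ = −1), each having virtual dimension −1, and hence are non-special: L(15, 4, 6^6), L(16, 3, 6^7), L(17, 2, 6^8), and L(22, 2, 6^{13}). -/

import Mathlib

open MvPolynomial

/-- The iterated partial derivative corresponding to the multi-index `ν`. -/
noncomputable def mderiv (ν : Fin 3 → ℕ) :
    MvPolynomial (Fin 3) ℂ →ₗ[ℂ] MvPolynomial (Fin 3) ℂ :=
  ((pderiv (R := ℂ) (0 : Fin 3)).toLinearMap ^ ν 0) ∘ₗ
  ((pderiv (R := ℂ) (1 : Fin 3)).toLinearMap ^ ν 1) ∘ₗ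
  ((pderiv (R := ℂ) (2 : Fin 3)).toLinearMap ^ ν 2)

/-- The linear system `L(d; m)` of homogeneous forms of degree `d` in three variables
all of whose partial derivatives of order `< m i` vanish at the point `p i`,
i.e. plane curves of degree `d` with multiplicity at least `m i` at `p i`. -/
noncomputable def linSys {k : ℕ} (p : Fin k → Fin 3 → ℂ) (d : ℕ) (m : Fin k → ℕ) :
    Submodule ℂ (MvPolynomial (Fin 3) ℂ) :=
  (homogeneousSubmodule (Fin 3) ℂ d) ⊓
    ⨅ (i : Fin k), ⨅ (ν : Fin 3 → ℕ), ⨅ (_ : ν 0 + ν 1 + ν 2 < m i),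
      LinearMap.ker ((aeval (p i)).toLinearMap ∘ₗ mderiv ν)

/-- The projective dimension `ℓ` of the linear system (`-1` means empty). -/
noncomputable def projDim {k : ℕ} (p : Fin k → Fin 3 → ℂ) (d : ℕ) (m : Fin k → ℕ) : ℤ :=
  (Module.finrank ℂ (linSys p d m) : ℤ) - 1

/-- The virtual dimension `v = d(d+3)/2 - ∑ mᵢ(mᵢ+1)/2`. -/
def virtDim {k : ℕ} (d : ℕ) (m : Fin k → ℕ) : ℤ :=
  ((d : ℤ) * (d + 3)) / 2 - ∑ i : Fin k, ((m i : ℤ) * (m i + 1)) / 2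

/-- The quasi-homogeneous multiplicity vector `(m₀, 6, …, 6)` on `n + 1` points. -/
def qh (n m0 : ℕ) : Fin (n + 1) → ℕ := fun i => if i = 0 then m0 else 6

/-- A property `Q` of configurations of `k` points of `ℙ²` (given by nonzero homogeneous
coordinate vectors) holds for points in general position: there is a nonzero polynomial
in the coordinates such that `Q` holds whenever it does not vanish. -/
def Generically (k : ℕ) (Q : (Fin k → Fin 3 → ℂ) → Prop) : Prop :=
  ∃ P : MvPolynomial (Fin k × Fin 3) ℂ, P ≠ 0 ∧
    ∀ p : Fin k → Fin 3 → ℂ, (∀ i, p i ≠ 0) →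
      eval (fun x => p x.1 x.2) P ≠ 0 → Q p

/-!
Dumnicki and Jarnicki's diagram cutting. A polynomial with exponents in `D` that has multiplicity
`m` at a point off the coordinate axes is zero as soon as `D` has layers of at most `m, m - 1, …, 1`
elements in some direction: the Euler operator `x ∂/∂x - c` removes a layer and costs one order of
vanishing. Now let a further point tend to the boundary along a monomial curve
`t ↦ (t ^ w₀, t ^ w₁, t ^ w₂)`. Comparing lowest order terms in `t`, the exponents of small weight
only matter for the moving point and the remaining ones only for the other points. So if the
triangle of exponents of degree `d` can be cut successively into such staircases, one for each
point, then the system is empty for one configuration over an iterated polynomial ring over `ℤ`. A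
maximal minor of the matrix of the vanishing conditions, which has integer coefficients as a
polynomial in the points, is then nonzero, and its nonvanishing makes the system empty over `ℂ`.
-/

section VanishingOrder

variable {σ R S : Type*} [CommRing R] [CommRing S]

/-- The iterated partial derivative along a word `s` in the variables. Words, rather than
multi-indices, index derivatives so that induction on the order peels off one derivative. -/
noncomputable def iteratedPDeriv : List σ → MvPolynomial σ R →ₗ[R] MvPolynomial σ R
  | [] => LinearMap.id
  | i :: s => iteratedPDeriv s ∘ₗ (pderiv i).toLinearMap

/-- `f` has multiplicity at least `m` at `p`: its partial derivatives of order `< m` vanish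
at `p`. -/
def VanishesToOrder (p : σ → R) (m : ℕ) (f : MvPolynomial σ R) : Prop :=
  ∀ s : List σ, s.length < m → eval p (iteratedPDeriv s f) = 0

lemma iteratedPDeriv_map (φ : R →+* S) (s : List σ) (f : MvPolynomial σ R) :
    iteratedPDeriv s (map φ f) = map φ (iteratedPDeriv s f) := by
  induction s generalizing f with
  | nil => rfl
  | cons i s ih => simp [iteratedPDeriv, pderiv_map, ih]

namespace VanishesToOrder

variable {p : σ → R} {m : ℕ} {f g : MvPolynomial σ R}

lemma succ_iff : VanishesToOrder p (m + 1) f ↔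
    eval p f = 0 ∧ ∀ i, VanishesToOrder p m (pderiv i f) := by
  refine ⟨fun h => ⟨h [] m.succ_pos, fun i s hs => h (i :: s) (Nat.succ_lt_succ hs)⟩, ?_⟩
  rintro ⟨h₀, h₁⟩ (_ | ⟨i, s⟩) hs
  · exact h₀
  · exact h₁ i s (Nat.lt_of_succ_lt_succ hs)

lemma of_succ (hf : VanishesToOrder p (m + 1) f) : VanishesToOrder p m f :=
  fun s hs => hf s (hs.trans m.lt_succ_self)

lemma add (hf : VanishesToOrder p m f) (hg : VanishesToOrder p m g) :
    VanishesToOrder p m (f + g) :=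
  fun s hs => by rw [map_add, map_add, hf s hs, hg s hs, add_zero]

lemma mul_left (g : MvPolynomial σ R) (hf : VanishesToOrder p m f) :
    VanishesToOrder p m (g * f) := by
  induction m generalizing f g with
  | zero => exact fun _ hs => absurd hs (Nat.not_lt_zero _)
  | succ m ih =>
    obtain ⟨hf₀, hf'⟩ := succ_iff.1 hf
    refine succ_iff.2 ⟨by rw [map_mul, hf₀, mul_zero], fun i => ?_⟩
    rw [pderiv_mul]
    exact (ih _ hf.of_succ).add (ih _ (hf' i))

end VanishesToOrder

/-- The image of a polynomial under a linear map applied to each coefficient. -/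
noncomputable def mapCoeff [Algebra R S] (φ : S →ₗ[R] R) (f : MvPolynomial σ S) :
    MvPolynomial σ R :=
  AddMonoidAlgebra.map φ.toAddMonoidHom f

section MapCoeff

variable [Algebra R S] (φ : S →ₗ[R] R) (f : MvPolynomial σ S)

lemma coeff_mapCoeff (α : σ →₀ ℕ) : coeff α (mapCoeff φ f) = φ (coeff α f) := rfl

lemma eval_mapCoeff (p : σ → R) :
    eval p (mapCoeff φ f) = φ (eval (fun i => algebraMap R S (p i)) f) := by
  induction f using MvPolynomial.induction_on' with
  | monomial α a =>
    have h : mapCoeff φ (monomial α a) = monomial α (φ a) := AddMonoidAlgebra.map_single _ _ _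
    simp only [h, eval_monomial, ← map_pow, Finsupp.prod]
    rw [← map_prod, mul_comm a, ← Algebra.smul_def, map_smul, smul_eq_mul, mul_comm]
  | add f g hf hg =>
    rw [mapCoeff, AddMonoidAlgebra.map_add, map_add, map_add, map_add, ← hf, ← hg]
    rfl

lemma pderiv_mapCoeff (i : σ) : pderiv i (mapCoeff φ f) = mapCoeff φ (pderiv i f) := by
  ext α
  simp_rw [coeff_mapCoeff, coeff_pderiv, coeff_mapCoeff, ← Nat.cast_succ, ← nsmul_eq_mul',
    map_nsmul]

variable {φ f} in
/-- Vanishing at a point defined over `R` is a system of linear equations over `R`. -/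
lemma VanishesToOrder.mapCoeff {p : σ → R} {m : ℕ}
    (hf : VanishesToOrder (fun i => algebraMap R S (p i)) m f) :
    VanishesToOrder p m (mapCoeff φ f) := by
  induction m generalizing f with
  | zero => exact fun _ hs => absurd hs (Nat.not_lt_zero _)
  | succ m ih =>
    obtain ⟨hf₀, hf'⟩ := succ_iff.1 hf
    refine succ_iff.2 ⟨by rw [eval_mapCoeff, hf₀, map_zero], fun i => ?_⟩
    rw [pderiv_mapCoeff]
    exact ih (hf' i)

end MapCoeff

/-- The substitution `X i ↦ a i * X i`, which moves the point `1` to `a`. -/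
noncomputable def rescale (a : σ → R) : MvPolynomial σ R →ₐ[R] MvPolynomial σ R :=
  aeval fun i => C (a i) * X i

section Rescale

variable (a : σ → R) (f : MvPolynomial σ R)

lemma coeff_rescale (α : σ →₀ ℕ) :
    coeff α (rescale a f) = coeff α f * α.prod fun i n => a i ^ n := by
  classical
  induction f using MvPolynomial.induction_on' with
  | monomial β b =>
    have h : rescale a (monomial β b) = monomial β (b * β.prod fun i n => a i ^ n) := by
      simp only [rescale, aeval_monomial, mul_pow, Finsupp.prod_mul, ← C_pow, algebraMap_eq]
      rw [← mul_assoc, Finsupp.prod, ← map_prod, ← C_mul, ← monomial_eq]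
      rfl
    rw [h, coeff_monomial, coeff_monomial]
    split_ifs with hβ
    · rw [hβ]
    · rw [zero_mul]
  | add f g hf hg => rw [map_add, coeff_add, hf, hg, coeff_add, add_mul]

lemma eval_rescale (p : σ → R) : eval p (rescale a f) = eval (a * p) f := by
  induction f using MvPolynomial.induction_on with
  | C b => simp [rescale]
  | add f g hf hg => rw [map_add, map_add, hf, hg, map_add]
  | mul_X f i hf => rw [map_mul, map_mul, hf, map_mul]; simp [rescale]

lemma pderiv_rescale (i : σ) : pderiv i (rescale a f) = C (a i) * rescale a (pderiv i f) := by
  classical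
  ext α
  rw [coeff_C_mul, coeff_rescale, coeff_pderiv, coeff_pderiv, coeff_rescale,
    Finsupp.prod_add_index' (by simp) (by simp [pow_add]), Finsupp.prod_single_index (by simp)]
  ring

variable {a f} in
lemma VanishesToOrder.rescale {p : σ → R} {m : ℕ} (hf : VanishesToOrder (a * p) m f) :
    VanishesToOrder p m (rescale a f) := by
  induction m generalizing f with
  | zero => exact fun _ hs => absurd hs (Nat.not_lt_zero _)
  | succ m ih =>
    obtain ⟨hf₀, hf'⟩ := succ_iff.1 hf
    refine succ_iff.2 ⟨by rw [eval_rescale, hf₀], fun i => ?_⟩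
    rw [pderiv_rescale]
    exact (ih (hf' i)).mul_left _

end Rescale

end VanishingOrder

section EulerOperator

variable {σ R : Type*} [CommRing R]

/-- The Euler operator `X i * ∂/∂(X i) - c`, which scales the coefficient of `α` by `α i - c`. -/
noncomputable def eulerShift (i : σ) (c : ℕ) (f : MvPolynomial σ R) : MvPolynomial σ R :=
  X i * pderiv i f - C (c : R) * f

lemma coeff_eulerShift (i : σ) (c : ℕ) (f : MvPolynomial σ R) (α : σ →₀ ℕ) :
    coeff α (eulerShift i c f) = (α i - c) * coeff α f := by
  classical
  suffices h : coeff α (X i * pderiv i f) = α i * coeff α f by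
    rw [eulerShift, coeff_sub, coeff_C_mul, h, sub_mul]
  induction f using MvPolynomial.induction_on' with
  | monomial β b =>
    rw [X_mul_pderiv_monomial, coeff_smul, nsmul_eq_mul, coeff_monomial]
    split_ifs with hβ <;> simp [hβ]
  | add f g hf hg => rw [map_add, mul_add, coeff_add, hf, hg, coeff_add, mul_add]

variable {p : σ → R} {m : ℕ} {f : MvPolynomial σ R}

lemma VanishesToOrder.eulerShift (hf : VanishesToOrder p (m + 1) f) (i : σ) (c : ℕ) :
    VanishesToOrder p m (eulerShift i c f) := by
  rw [_root_.eulerShift, sub_eq_add_neg, ← neg_mul]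
  exact ((succ_iff.1 hf).2 i |>.mul_left _).add (hf.of_succ.mul_left _)

/-- Apply Euler operators until a single monomial is left: it does not vanish at `p`. -/
lemma VanishesToOrder.eq_zero_of_card_support_le [IsDomain R] [CharZero R] (hp : ∀ i, p i ≠ 0)
    (hf : VanishesToOrder p m f) (hm : f.support.card ≤ m) : f = 0 := by
  classical
  induction m generalizing f with
  | zero => exact support_eq_empty.1 (Finset.card_eq_zero.1 (Nat.le_zero.1 hm))
  | succ m ih =>
    by_contra hne
    obtain ⟨β, hβ⟩ := Finset.nonempty_iff_ne_empty.2 (mt support_eq_empty.1 hne)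
    have hβ₀ : coeff β f ≠ 0 := mem_support_iff.1 hβ
    by_cases hsingle : ∀ γ ∈ f.support, γ = β
    · have hsupp : f.support = {β} := Finset.eq_singleton_iff_unique_mem.2 ⟨hβ, hsingle⟩
      have heval := (succ_iff.1 hf).1
      rw [eval_eq, hsupp, Finset.sum_singleton] at heval
      exact mul_ne_zero hβ₀ (Finset.prod_ne_zero_iff.2 fun i _ => pow_ne_zero _ (hp i)) heval
    · push Not at hsingle
      obtain ⟨γ, hγ, hγβ⟩ := hsingle
      obtain ⟨i, hi⟩ := DFunLike.ne_iff.1 hγβ.symm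
      have hsupp : (_root_.eulerShift i (γ i) f).support ⊆ f.support.erase γ := fun α hα => by
        rw [mem_support_iff, coeff_eulerShift] at hα
        refine Finset.mem_erase.2 ⟨?_, mem_support_iff.2 (right_ne_zero_of_mul hα)⟩
        rintro rfl
        simp at hα
      have hcard : (f.support.erase γ).card ≤ m := by
        rw [Finset.card_erase_of_mem hγ]
        omega
      have hzero := ih (hf.eulerShift i (γ i)) ((Finset.card_le_card hsupp).trans hcard)
      have hcoeff := coeff_eulerShift i (γ i) f β
      rw [hzero, coeff_zero, eq_comm] at hcoeff
      exact mul_ne_zero (sub_ne_zero.2 (Nat.cast_injective.ne hi)) hβ₀ hcoeff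

end EulerOperator

section Staircase

variable {σ R ι : Type*} [CommRing R]

/-- No nonzero polynomial with exponents in `D` has multiplicity at least `m i` at `p i` for
every `i`. -/
def IsEmptySystem (D : Finset (σ → ℕ)) (p : ι → σ → R) (m : ι → ℕ) : Prop :=
  ∀ f : MvPolynomial σ R, (∀ α ∈ f.support, ⇑α ∈ D) →
    (∀ i, VanishesToOrder (p i) (m i) f) → f = 0

/-- The exponents in `D` with `i`-th entry `c`. -/
def layer (D : Finset (σ → ℕ)) (i : σ) (c : ℕ) : Finset (σ → ℕ) :=
  D.filter (· i = c)

/-- The levels in direction `i` whose layers are at least as large as the one at level `c`. -/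
def levelsAbove (D : Finset (σ → ℕ)) (i : σ) (c : ℕ) : Finset ℕ :=
  (D.image (· i)).filter fun b => (layer D i c).card ≤ (layer D i b).card

/-- The layers of `D` in direction `i`, in decreasing order of size, have at most
`m, m - 1, …, 1` elements. -/
def IsStaircase (D : Finset (σ → ℕ)) (i : σ) (m : ℕ) : Prop :=
  ∀ c ∈ D.image (· i), (levelsAbove D i c).card + (layer D i c).card ≤ m + 1

instance (D : Finset (σ → ℕ)) (i : σ) (m : ℕ) : Decidable (IsStaircase D i m) :=
  inferInstanceAs (Decidable (∀ _ ∈ _, _))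

variable {D : Finset (σ → ℕ)} {i : σ} {m : ℕ}

lemma card_levelsAbove_pos {c : ℕ} (hc : c ∈ D.image (· i)) : 0 < (levelsAbove D i c).card :=
  Finset.card_pos.2 ⟨c, Finset.mem_filter.2 ⟨hc, le_rfl⟩⟩

lemma IsStaircase.eq_empty (h : IsStaircase D i 0) : D = ∅ := by
  by_contra hne
  obtain ⟨α, hα⟩ := Finset.nonempty_iff_ne_empty.2 hne
  have hc := Finset.mem_image_of_mem (· i) hα
  have hlayer : 0 < (layer D i (α i)).card :=
    Finset.card_pos.2 ⟨α, Finset.mem_filter.2 ⟨hα, rfl⟩⟩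
  have := h _ hc
  have := card_levelsAbove_pos hc
  omega

lemma IsStaircase.exists_layer (h : IsStaircase D i (m + 1)) :
    ∃ c, (layer D i c).card ≤ m + 1 ∧ IsStaircase (D.filter (· i ≠ c)) i m := by
  obtain rfl | hD := D.eq_empty_or_nonempty
  · exact ⟨0, by simp [layer], by simp [IsStaircase]⟩
  obtain ⟨c, hc, hmax⟩ := (D.image (· i)).exists_max_image (fun b => (layer D i b).card)
    (hD.image _)
  refine ⟨c, by have := h c hc; have := card_levelsAbove_pos hc; omega, fun b hb => ?_⟩
  have hlayer {a : ℕ} (ha : a ≠ c) : layer (D.filter (· i ≠ c)) i a = layer D i a := by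
    ext α
    simp only [layer, Finset.mem_filter]
    grind
  have himage : (D.filter (· i ≠ c)).image (· i) = (D.image (· i)).erase c := by
    ext a
    simp only [Finset.mem_image, Finset.mem_filter, Finset.mem_erase]
    grind
  rw [himage] at hb
  obtain ⟨hbc, hb⟩ := Finset.mem_erase.1 hb
  have hlevels : levelsAbove (D.filter (· i ≠ c)) i b = (levelsAbove D i b).erase c := by
    ext a
    simp only [levelsAbove, himage, hlayer hbc, Finset.mem_filter, Finset.mem_erase]
    grind
  have hmem : c ∈ levelsAbove D i b := Finset.mem_filter.2 ⟨hc, hmax b hb⟩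
  rw [hlevels, Finset.card_erase_of_mem hmem, hlayer hbc]
  have := h b hb
  have := card_levelsAbove_pos hb
  omega

/-- The Euler operator for the largest layer removes this layer and lowers the order of vanishing
by one, so by induction `f` is supported on that layer. -/
theorem IsStaircase.isEmptySystem [IsDomain R] [CharZero R] {p : σ → R} (hp : ∀ j, p j ≠ 0)
    (h : IsStaircase D i m) : IsEmptySystem D ![p] ![m] := by
  intro f hD hf
  replace hf : VanishesToOrder p m f := hf 0
  induction m generalizing D f with
  | zero =>
    refine support_eq_empty.1 (Finset.eq_empty_of_forall_notMem fun α hα => ?_)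
    simpa [h.eq_empty] using hD α hα
  | succ m ih =>
    obtain ⟨c, hcard, hrest⟩ := h.exists_layer
    have hzero : eulerShift i c f = 0 := by
      refine ih hrest _ (fun α hα => ?_) (hf.eulerShift i c)
      rw [mem_support_iff, coeff_eulerShift] at hα
      refine Finset.mem_filter.2 ⟨hD α (mem_support_iff.2 (right_ne_zero_of_mul hα)), ?_⟩
      rintro rfl
      simp at hα
    have hlayer : ∀ α ∈ f.support, ⇑α ∈ layer D i c := fun α hα => by
      have hα₀ := coeff_eulerShift i c f α
      rw [hzero, coeff_zero, zero_eq_mul, sub_eq_zero, Nat.cast_inj] at hα₀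
      exact Finset.mem_filter.2 ⟨hD α hα, hα₀.resolve_right (mem_support_iff.1 hα)⟩
    exact hf.eq_zero_of_card_support_le hp
      ((Finset.card_le_card_of_injOn _ hlayer DFunLike.coe_injective.injOn).trans hcard)

end Staircase

section Degeneration

variable {σ R : Type*} [Fintype σ] [CommRing R]

/-- The configuration over `R[t]` obtained from `p` by adding the point with coordinates
`t ^ w i` in front. -/
noncomputable def consMonomialPoint {k : ℕ} (w : σ → ℕ) (p : Fin k → σ → R) :
    Fin (k + 1) → σ → Polynomial R :=
  Fin.cons (fun i => Polynomial.X ^ w i) fun j i => Polynomial.C (p j i)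

lemma coeff_rescale_X_pow (w : σ → ℕ) (f : MvPolynomial σ (Polynomial R)) (α : σ →₀ ℕ) :
    coeff α (rescale (fun i => Polynomial.X ^ w i) f) = coeff α f * Polynomial.X ^ (w ⬝ᵥ α) := by
  rw [coeff_rescale, Finsupp.prod_fintype _ _ fun _ => pow_zero _]
  simp_rw [← pow_mul, Finset.prod_pow_eq_pow_sum]
  rfl

variable {k : ℕ} {D : Finset (σ → ℕ)} {p : Fin k → σ → R} {m : Fin (k + 1) → ℕ} {w : σ → ℕ}
  {T : ℕ} {f : MvPolynomial σ (Polynomial R)} {n : ℕ}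

/-- Substituting `X i ↦ t ^ w i * X i` multiplies the coefficient of `α` by `t ^ (w ⬝ᵥ α)`, so the
coefficient of `t ^ (n + w ⬝ᵥ β)` only involves exponents of weight at most `w ⬝ᵥ β`. -/
lemma IsEmptySystem.coeff_coeff_eq_zero_of_lt
    (h : IsEmptySystem (D.filter (w ⬝ᵥ · < T)) ![(1 : σ → R)] ![m 0])
    (hD : ∀ α ∈ f.support, ⇑α ∈ D)
    (hf : VanishesToOrder (fun i => Polynomial.X ^ w i) (m 0) f)
    (hn : ∀ l < n, ∀ α, (coeff α f).coeff l = 0) {β : σ →₀ ℕ} (hβ : w ⬝ᵥ β < T) :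
    (coeff β f).coeff n = 0 := by
  set g := mapCoeff (Polynomial.lcoeff R (n + w ⬝ᵥ β)) (rescale (fun i => Polynomial.X ^ w i) f)
  have coeff_g (α : σ →₀ ℕ) :
      coeff α g = (coeff α f * Polynomial.X ^ (w ⬝ᵥ α)).coeff (n + w ⬝ᵥ β) := by
    rw [coeff_mapCoeff, coeff_rescale_X_pow, Polynomial.lcoeff_apply]
  have hg : VanishesToOrder (1 : σ → R) (m 0) g := by
    refine VanishesToOrder.mapCoeff (VanishesToOrder.rescale ?_)
    convert hf
    simp
  have hg₀ : g = 0 := by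
    refine h g (fun α hα => ?_) (Fin.forall_fin_one.2 hg)
    rw [mem_support_iff, coeff_g, Polynomial.coeff_mul_X_pow'] at hα
    obtain ⟨hle, hne⟩ := ite_ne_right_iff.1 hα
    have hα₀ : α ∈ f.support := mem_support_iff.2 fun hα => hne (by rw [hα, Polynomial.coeff_zero])
    have := mt (fun hlt => hn _ hlt α) hne
    exact Finset.mem_filter.2 ⟨hD α hα₀, by omega⟩
  rw [← Polynomial.coeff_mul_X_pow _ (w ⬝ᵥ β), ← coeff_g, hg₀, coeff_zero]

theorem IsEmptySystem.consMonomialPoint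
    (hlow : IsEmptySystem (D.filter (w ⬝ᵥ · < T)) ![(1 : σ → R)] ![m 0])
    (hhigh : IsEmptySystem (D.filter (¬ w ⬝ᵥ · < T)) p (Fin.tail m)) :
    IsEmptySystem D (consMonomialPoint w p) m := by
  intro f hD hf
  suffices hn : ∀ n α, (coeff α f).coeff n = 0 from
    MvPolynomial.ext _ _ fun α => Polynomial.ext fun n => by simp [hn]
  intro n
  induction n using Nat.strong_induction_on with
  | _ n ih =>
  have low {β : σ →₀ ℕ} : w ⬝ᵥ β < T → (coeff β f).coeff n = 0 :=
    hlow.coeff_coeff_eq_zero_of_lt hD (hf 0) ih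
  have high : mapCoeff (Polynomial.lcoeff R n) f = 0 := by
    refine hhigh _ (fun α hα => ?_) fun j => VanishesToOrder.mapCoeff (hf j.succ)
    rw [mem_support_iff, coeff_mapCoeff, Polynomial.lcoeff_apply] at hα
    have hα₀ : α ∈ f.support := mem_support_iff.2 fun h => hα (by rw [h, Polynomial.coeff_zero])
    exact Finset.mem_filter.2 ⟨hD α hα₀, mt low hα⟩
  intro α
  rw [← Polynomial.lcoeff_apply, ← coeff_mapCoeff, high, coeff_zero]

end Degeneration

section CutSequence

/-- A cut `{α | weight ⬝ᵥ α < threshold}` of a diagram of exponents, together with the direction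
in which the part that is cut off is a staircase. -/
structure Cut (σ : Type*) where
  weight : σ → ℕ
  threshold : ℕ
  axis : σ

variable {σ : Type*} [Fintype σ]

/-- The cuts remove, one after another, staircases of sizes `m 0, m 1, …` from `D` until nothing
is left. -/
def IsCutSequence : {k : ℕ} → (Fin k → ℕ) → (Fin k → Cut σ) → Finset (σ → ℕ) → Prop
  | 0, _, _, D => D = ∅
  | _ + 1, m, cuts, D =>
    IsStaircase (D.filter ((cuts 0).weight ⬝ᵥ · < (cuts 0).threshold)) (cuts 0).axis (m 0) ∧
      IsCutSequence (Fin.tail m) (Fin.tail cuts)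
        (D.filter (¬ (cuts 0).weight ⬝ᵥ · < (cuts 0).threshold))

instance IsCutSequence.decidable [DecidableEq σ] : {k : ℕ} → (m : Fin k → ℕ) →
    (cuts : Fin k → Cut σ) → (D : Finset (σ → ℕ)) → Decidable (IsCutSequence m cuts D)
  | 0, _, _, D => inferInstanceAs (Decidable (D = ∅))
  | _ + 1, m, cuts, D =>
    have := IsCutSequence.decidable (Fin.tail m) (Fin.tail cuts)
      (D.filter (¬ (cuts 0).weight ⬝ᵥ · < (cuts 0).threshold))
    inferInstanceAs (Decidable (_ ∧ _))

/-- Place the points on monomial curves over iterated polynomial rings, the last one first. -/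
theorem IsCutSequence.exists_isEmptySystem {k : ℕ} {m : Fin k → ℕ} {cuts : Fin k → Cut σ}
    {D : Finset (σ → ℕ)} (h : IsCutSequence m cuts D) :
    ∃ (R : Type) (_ : CommRing R) (_ : IsDomain R) (_ : CharZero R) (p : Fin k → σ → R),
      IsEmptySystem D p m := by
  induction k generalizing D with
  | zero =>
    refine ⟨ℤ, inferInstance, inferInstance, inferInstance, 0, fun f hf _ => ?_⟩
    refine support_eq_empty.1 (Finset.eq_empty_of_forall_notMem fun α hα => ?_)
    simpa [show D = ∅ from h] using hf α hα
  | succ k ih =>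
    obtain ⟨R, _, _, _, p, hp⟩ := ih h.2
    exact ⟨Polynomial R, inferInstance, inferInstance, inferInstance, _,
      (h.1.isEmptySystem fun _ => one_ne_zero).consMonomialPoint hp⟩

end CutSequence

section Genericity

lemma span_range_row_eq_top_of_mulVec_injective {m n K : Type*} [Fintype n] [Field K]
    {A : Matrix m n K} (hA : Function.Injective A.mulVec) :
    Submodule.span K (Set.range A.row) = ⊤ := by
  classical
  by_contra hne
  obtain ⟨φ, hφ, hker⟩ := Submodule.exists_le_ker_of_lt_top _ (lt_top_iff_ne_top.2 hne)
  obtain ⟨v, rfl⟩ := (dotProductEquiv K n).surjective φ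
  refine hφ ((LinearEquiv.map_eq_zero_iff _).2 (hA ?_))
  rw [Matrix.mulVec_zero]
  ext r
  have := hker (Submodule.subset_span ⟨r, rfl⟩)
  rwa [LinearMap.mem_ker, dotProductEquiv_apply_apply, dotProduct_comm] at this

lemma mulVec_map_algebraMap_injective {m n R : Type*} (K : Type*) [Fintype n] [CommRing R] [Field K]
    [Algebra R K] [IsFractionRing R K] {M : Matrix m n R} (hM : Function.Injective M.mulVec) :
    Function.Injective (M.map (algebraMap R K)).mulVec := by
  rw [Matrix.mulVec_injective_iff] at hM ⊢
  have hinj : Function.Injective ((Algebra.linearMap R K).compLeft m) :=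
    (IsFractionRing.injective R K).comp_left
  exact (LinearIndependent.iff_fractionRing R K).1 (hM.map' _ (LinearMap.ker_eq_bot.2 hinj))

lemma exists_submatrix_det_ne_zero_of_mulVec_injective {m n R : Type*} [Fintype n] [DecidableEq n]
    [CommRing R] [IsDomain R] {M : Matrix m n R} (hM : Function.Injective M.mulVec) :
    ∃ r : n → m, (M.submatrix r id).det ≠ 0 := by
  let K := FractionRing R
  have hspan := span_range_row_eq_top_of_mulVec_injective (mulVec_map_algebraMap_injective K hM)
  obtain ⟨κ, a, -, hκ, hli⟩ := exists_linearIndependent' K (M.map (algebraMap R K)).row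
  let e : n ≃ κ := (Pi.basisFun K n).indexEquiv (.mk hli (hspan.symm.trans hκ.symm).le)
  have hunit : IsUnit ((M.submatrix (a ∘ e) id).map (algebraMap R K)) :=
    Matrix.linearIndependent_rows_iff_isUnit.1 (hli.comp e e.injective)
  refine ⟨a ∘ e, fun hdet => ?_⟩
  rw [Matrix.isUnit_iff_isUnit_det, ← RingHom.mapMatrix_apply, ← RingHom.map_det, hdet, map_zero]
    at hunit
  exact not_isUnit_zero hunit

variable {σ ι R S : Type*} [Finite σ] [CommRing R] [CommRing S]

/-- The polynomial with exponents in `D` and prescribed coefficients. -/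
noncomputable def ofCoeff (D : Finset (σ → ℕ)) (c : D → R) : MvPolynomial σ R :=
  ∑ α, monomial (Finsupp.equivFunOnFinite.symm α.1) (c α)

/-- The matrix of the linear conditions on the coefficients of a polynomial with exponents in `D`
which say that it has multiplicity at least `m i` at `p i` for every `i`. -/
noncomputable def conditionMatrix (D : Finset (σ → ℕ)) (p : ι → σ → R) (m : ι → ℕ) :
    Matrix (Σ i, {s : List σ // s.length < m i}) D R :=
  fun r α => eval (p r.1) (iteratedPDeriv r.2 (monomial (Finsupp.equivFunOnFinite.symm α.1) 1))

variable {D : Finset (σ → ℕ)} {p : ι → σ → R} {m : ι → ℕ}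

lemma conditionMatrix_map (φ : R →+* S) :
    conditionMatrix D (fun i j => φ (p i j)) m = (conditionMatrix D p m).map φ := by
  ext r α
  rw [Matrix.map_apply, conditionMatrix, conditionMatrix, eval₂_comp, ← eval_map,
    ← iteratedPDeriv_map, map_monomial, map_one φ]
  rfl

lemma coeff_ofCoeff (c : D → R) (α : D) :
    coeff (Finsupp.equivFunOnFinite.symm α.1) (ofCoeff D c) = c α := by
  classical
  simp_rw [ofCoeff, coeff_sum, coeff_monomial, EmbeddingLike.apply_eq_iff_eq, ← Subtype.ext_iff]
  exact (Finset.sum_ite_eq' _ _ _).trans (if_pos (Finset.mem_univ _))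

lemma mem_of_mem_support_ofCoeff {c : D → R} {α : σ →₀ ℕ} (hα : α ∈ (ofCoeff D c).support) :
    ⇑α ∈ D := by
  classical
  obtain ⟨β, -, hβ⟩ := Finset.mem_biUnion.1 (support_sum hα)
  rw [Finset.mem_singleton.1 (support_monomial_subset hβ)]
  exact β.2

lemma ofCoeff_coeff {f : MvPolynomial σ R} (hf : ∀ α ∈ f.support, ⇑α ∈ D) :
    ofCoeff D (fun α => coeff (Finsupp.equivFunOnFinite.symm α.1) f) = f := by
  ext α
  by_cases hα : ⇑α ∈ D
  · simpa using coeff_ofCoeff (fun β : D => coeff (Finsupp.equivFunOnFinite.symm β.1) f) ⟨α, hα⟩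
  · rw [notMem_support_iff.1 (mt (hf α) hα),
      notMem_support_iff.1 (mt mem_of_mem_support_ofCoeff hα)]

lemma conditionMatrix_mulVec_eq_zero_iff {c : D → R} :
    (conditionMatrix D p m).mulVec c = 0 ↔ ∀ i, VanishesToOrder (p i) (m i) (ofCoeff D c) := by
  have h (r : Σ i, {s : List σ // s.length < m i}) : (conditionMatrix D p m).mulVec c r =
      eval (p r.1) (iteratedPDeriv r.2 (ofCoeff D c)) := by
    rw [ofCoeff, map_sum, map_sum]
    refine Finset.sum_congr rfl fun α _ => ?_
    rw [← mul_one (c α), ← smul_eq_mul (c α), ← smul_monomial, map_smul, smul_eval, mul_comm,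
      smul_eq_mul, mul_one]
    rfl
  simp only [funext_iff, h, Sigma.forall, Subtype.forall, Pi.zero_apply, VanishesToOrder]

lemma isEmptySystem_iff_mulVec_injective :
    IsEmptySystem D p m ↔ Function.Injective (conditionMatrix D p m).mulVec := by
  rw [← Matrix.coe_mulVecLin, injective_iff_map_eq_zero]
  refine ⟨fun h c hc => ?_, fun h f hD hf => ?_⟩
  · have hzero := h _ (fun _ => mem_of_mem_support_ofCoeff)
      (conditionMatrix_mulVec_eq_zero_iff.1 hc)
    ext α
    rw [← coeff_ofCoeff c, hzero, coeff_zero, Pi.zero_apply]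
  · rw [← ofCoeff_coeff hD] at hf ⊢
    rw [h _ (conditionMatrix_mulVec_eq_zero_iff.2 hf)]
    simp [ofCoeff]

/-- A maximal minor of the condition matrix, as a polynomial in the coordinates of the points. -/
noncomputable def conditionMinor [DecidableEq (σ → ℕ)] (D : Finset (σ → ℕ)) (m : ι → ℕ)
    (r : D → Σ i, {s : List σ // s.length < m i}) : MvPolynomial (ι × σ) ℤ :=
  ((conditionMatrix D (fun i j => X (i, j)) m).submatrix r id).det

lemma aeval_conditionMinor [DecidableEq (σ → ℕ)] (p : ι → σ → R)
    (r : D → Σ i, {s : List σ // s.length < m i}) :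
    aeval (fun x => p x.1 x.2) (conditionMinor D m r) =
      ((conditionMatrix D p m).submatrix r id).det := by
  let φ : MvPolynomial (ι × σ) ℤ →+* R := (aeval fun x : ι × σ => p x.1 x.2).toRingHom
  have h := conditionMatrix_map (D := D) (m := m) (p := fun i j => X (i, j)) φ
  simp only [φ, AlgHom.toRingHom_eq_coe, RingHom.coe_coe, aeval_X] at h
  rw [conditionMinor, AlgHom.map_det, h]
  rfl

theorem IsEmptySystem.exists_mvPolynomial [IsDomain R] (h : IsEmptySystem D p m) :
    ∃ P : MvPolynomial (ι × σ) ℤ, P ≠ 0 ∧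
      ∀ (K : Type*) [CommRing K] [IsDomain K] (q : ι → σ → K),
        aeval (fun x => q x.1 x.2) P ≠ 0 → IsEmptySystem D q m := by
  classical
  obtain ⟨r, hr⟩ := exists_submatrix_det_ne_zero_of_mulVec_injective
    (isEmptySystem_iff_mulVec_injective.1 h)
  refine ⟨conditionMinor D m r, fun hzero => hr ?_, fun K _ _ q hq => ?_⟩
  · rw [← aeval_conditionMinor, hzero, map_zero]
  · rw [aeval_conditionMinor] at hq
    rw [isEmptySystem_iff_mulVec_injective, ← Matrix.coe_mulVecLin, injective_iff_map_eq_zero]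
    exact fun c hc => Matrix.eq_zero_of_mulVec_eq_zero hq (funext fun i => congr_fun hc (r i))

end Genericity

section PlaneCurves

lemma commute_pderiv {σ R : Type*} [CommRing R] (i j : σ) :
    Commute (pderiv (R := R) i).toLinearMap (pderiv j).toLinearMap := by
  classical
  have h : ⁅pderiv (R := R) i, pderiv (R := R) j⁆ = 0 := by
    refine derivation_ext fun l => ?_
    rw [Derivation.commutator_apply]
    simp [pderiv_X, Pi.single_apply, apply_ite]
  exact LinearMap.ext fun f => sub_eq_zero.1 (DFunLike.congr_fun h f)

lemma mderiv_comp_pderiv (ν : Fin 3 → ℕ) (i : Fin 3) :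
    mderiv ν ∘ₗ (pderiv i).toLinearMap = mderiv (ν + Pi.single i 1) := by
  let der (j : Fin 3) : Module.End ℂ (MvPolynomial (Fin 3) ℂ) := (pderiv j).toLinearMap
  have h (i j n) : Commute (der i) (der j ^ n) := (commute_pderiv i j).pow_right n
  have mderiv_eq (μ : Fin 3 → ℕ) : mderiv μ = der 0 ^ μ 0 * (der 1 ^ μ 1 * der 2 ^ μ 2) := rfl
  rw [mderiv_eq, mderiv_eq]
  change _ * der i = _
  clear_value der
  fin_cases i
  · simp [pow_succ, mul_assoc, ((h 0 1 (ν 1)).mul_right (h 0 2 (ν 2))).eq]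
  · simp [pow_succ, mul_assoc, (h 1 2 (ν 2)).eq]
  · simp [pow_succ, mul_assoc]

lemma exists_iteratedPDeriv_eq_mderiv (s : List (Fin 3)) :
    ∃ ν : Fin 3 → ℕ, ν 0 + ν 1 + ν 2 = s.length ∧ iteratedPDeriv s = mderiv ν := by
  induction s with
  | nil => exact ⟨0, rfl, by simp [mderiv, iteratedPDeriv, Module.End.one_eq_id]⟩
  | cons i s ih =>
    obtain ⟨ν, hν, h⟩ := ih
    refine ⟨ν + Pi.single i 1, ?_, by rw [iteratedPDeriv, h, mderiv_comp_pderiv]⟩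
    rw [List.length_cons, ← hν]
    fin_cases i <;> simp <;> omega

variable {k d : ℕ} {m : Fin k → ℕ}

lemma IsEmptySystem.linSys_eq_bot {p : Fin k → Fin 3 → ℂ}
    (h : IsEmptySystem (Finset.Nat.antidiagonalTuple 3 d) p m) : linSys p d m = ⊥ := by
  refine (Submodule.eq_bot_iff _).2 fun f hf => ?_
  simp only [linSys, Submodule.mem_inf, Submodule.mem_iInf] at hf
  obtain ⟨hdeg, hvan⟩ := hf
  refine h f (fun α hα => ?_) fun i s hs => ?_
  · rw [Finset.Nat.mem_antidiagonalTuple, ← Finsupp.degree_eq_sum]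
    exact (DFunLike.congr_fun (Finsupp.degree_eq_weight_one (R := ℕ)) α).trans
      (hdeg (mem_support_iff.1 hα))
  · obtain ⟨ν, hν, hs_eq⟩ := exists_iteratedPDeriv_eq_mderiv s
    rw [hs_eq]
    exact hvan i ν (hν ▸ hs)

theorem IsCutSequence.generically_projDim_eq_neg_one {cuts : Fin k → Cut (Fin 3)}
    (h : IsCutSequence m cuts (Finset.Nat.antidiagonalTuple 3 d)) :
    Generically k fun p => projDim p d m = -1 ∧ ¬ projDim p d m > max (-1) (virtDim d m) := by
  obtain ⟨R, _, _, _, _, hempty⟩ := h.exists_isEmptySystem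
  obtain ⟨P, hP, hopen⟩ := hempty.exists_mvPolynomial
  have hinj := map_injective (σ := Fin k × Fin 3) _ (RingHom.injective_int (Int.castRingHom ℂ))
  refine ⟨map (Int.castRingHom ℂ) P, (map_ne_zero_iff _ hinj).2 hP, fun q _ hq => ?_⟩
  rw [eval_map, ← algebraMap_int_eq, ← aeval_def] at hq
  have hdim : projDim q d m = -1 := by
    rw [projDim, (hopen ℂ q hq).linSys_eq_bot, finrank_bot]
    rfl
  exact ⟨hdim, hdim ▸ (le_max_left _ _).not_gt⟩

end PlaneCurves

/-- Cuts of the triangle of exponents for `L(15, 4, 6^6)`, found by a computer search. -/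
def cutsDegree15 : Fin 7 → Cut (Fin 3) :=
  ![⟨![1, 0, 1], 4, 0⟩, ⟨![1, 1, 0], 6, 0⟩, ⟨![0, 1, 1], 6, 0⟩, ⟨![2, 1, 0], 12, 0⟩,
    ⟨![0, 1, 2], 12, 0⟩, ⟨![0, 1, 0], 6, 0⟩, ⟨![0, 0, 1], 7, 0⟩]

/-- Cuts of the triangle of exponents for `L(16, 3, 6^7)`, found by a computer search. -/
def cutsDegree16 : Fin 8 → Cut (Fin 3) :=
  ![⟨![1, 1, 0], 3, 0⟩, ⟨![0, 1, 1], 6, 0⟩, ⟨![0, 2, 1], 12, 0⟩, ⟨![1, 0, 1], 6, 0⟩,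
    ⟨![2, 0, 1], 12, 0⟩, ⟨![4, 0, 1], 23, 0⟩, ⟨![1, 0, 2], 16, 1⟩, ⟨![0, 0, 1], 14, 0⟩]

/-- Cuts of the triangle of exponents for `L(17, 2, 6^8)`, found by a computer search. -/
def cutsDegree17 : Fin 9 → Cut (Fin 3) :=
  ![⟨![1, 1, 0], 2, 0⟩, ⟨![0, 1, 1], 6, 0⟩, ⟨![1, 0, 1], 6, 0⟩, ⟨![0, 1, 2], 12, 0⟩,
    ⟨![2, 0, 1], 12, 0⟩, ⟨![0, 3, 4], 36, 0⟩, ⟨![0, 7, 4], 60, 0⟩, ⟨![1, 3, 0], 18, 0⟩,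
    ⟨![0, 0, 1], 11, 0⟩]

/-- Cuts of the triangle of exponents for `L(22, 2, 6^13)`, found by a computer search. -/
def cutsDegree22 : Fin 14 → Cut (Fin 3) :=
  ![⟨![1, 1, 0], 2, 0⟩, ⟨![0, 1, 1], 6, 0⟩, ⟨![0, 2, 1], 12, 0⟩, ⟨![1, 0, 1], 6, 0⟩,
    ⟨![2, 0, 1], 12, 0⟩, ⟨![3, 0, 1], 18, 0⟩, ⟨![3, 2, 0], 16, 0⟩, ⟨![0, 4, 3], 36, 0⟩,
    ⟨![0, 4, 7], 60, 0⟩, ⟨![7, 0, 4], 64, 0⟩, ⟨![7, 0, 2], 58, 0⟩, ⟨![3, 0, 5], 64, 0⟩,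
    ⟨![0, 1, 3], 38, 0⟩, ⟨![0, 0, 1], 17, 0⟩]

theorem empty_nonspecial_systems :
    (virtDim 15 (qh 6 4) = -1 ∧
      Generically 7 (fun p =>
        projDim p 15 (qh 6 4) = -1 ∧
        ¬ projDim p 15 (qh 6 4) > max (-1) (virtDim 15 (qh 6 4)))) ∧
    (virtDim 16 (qh 7 3) = -1 ∧
      Generically 8 (fun p =>
        projDim p 16 (qh 7 3) = -1 ∧
        ¬ projDim p 16 (qh 7 3) > max (-1) (virtDim 16 (qh 7 3)))) ∧
    (virtDim 17 (qh 8 2) = -1 ∧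
      Generically 9 (fun p =>
        projDim p 17 (qh 8 2) = -1 ∧
        ¬ projDim p 17 (qh 8 2) > max (-1) (virtDim 17 (qh 8 2)))) ∧
    (virtDim 22 (qh 13 2) = -1 ∧
      Generically 14 (fun p =>
        projDim p 22 (qh 13 2) = -1 ∧
        ¬ projDim p 22 (qh 13 2) > max (-1) (virtDim 22 (qh 13 2)))) :=
  ⟨⟨by decide +kernel, IsCutSequence.generically_projDim_eq_neg_one (cuts := cutsDegree15)
      (by decide +kernel)⟩,
    ⟨by decide +kernel, IsCutSequence.generically_projDim_eq_neg_one (cuts := cutsDegree16)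
      (by decide +kernel)⟩,
    ⟨by decide +kernel, IsCutSequence.generically_projDim_eq_neg_one (cuts := cutsDegree17)
      (by decide +kernel)⟩,
    ⟨by decide +kernel, IsCutSequence.generically_projDim_eq_neg_one (cuts := cutsDegree22)
      (by decide +kernel)⟩⟩
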